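/- Let R → S be a homomorphism of associative rings, A the abelian category of triples (N, M, f : N → M) with N a left S-module, M a left R-module, f an R-linear map, and E = (S, 0, 0). Then Ext^i_A(E, L) ≅ Ext^{i-1}_R(S, M) for all i ≥ 2 and all L = (N, M, f) ∈ A, where S is viewed as a left R-module via the ring homomorphism. -/

import Mathlib

open CategoryTheory CategoryTheory.Limits

universe u

variable {R S : Type u} [Ring R] [Ring S] (φ : R →+* S)

/-- The abelian category `A` of triples `(N, M, f)` with `N` a left `S`-module, `M` a left
`R`-module and `f : N → M` an `R`-module morphism, realized as a comma category. -/
abbrev TripleCat := Comma (ModuleCat.restrictScalars.{u} φ) (𝟭 (ModuleCat.{u} R))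

/-- The object `E = (S, 0, 0)`. -/
noncomputable def Eobj : TripleCat φ where
  left := ModuleCat.of S S
  right := ModuleCat.of R PUnit
  hom := 0

/-!
The sequence `0 ⟶ (0, S, 0) ⟶ (S, S, id) ⟶ E ⟶ 0` is exact, and `(S, S, id)` is projective because
`N ↦ (N, N, id)` is left adjoint to the exact functor `(N, M, f) ↦ N`. Dimension shifting therefore
identifies `Ext^i(E, L)` with `Ext^{i-1}((0, S, 0), L)` for `i ≥ 2`. Moreover `M ↦ (0, M, 0)` is an
exact left adjoint of the exact functor `(N, M, f) ↦ M`, and an adjunction of exact functors induces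
isomorphisms on `Ext`: unit and counit are natural with respect to `Ext` classes, since every class
of positive degree is a Yoneda product of connecting classes with a morphism.
-/

section ExtInduction

open Abelian DerivedCategory HomologicalComplex

universe w v u₁

variable {C : Type u₁} [Category.{v} C] [Abelian C]

lemma epi_f_of_quasiIsoAt_single {ι : Type*} [DecidableEq ι] {c : ComplexShape ι} {i : ι}
    {K : HomologicalComplex C c} {X : C} (π : K ⟶ (single C c i).obj X) [QuasiIsoAt π i] :
    Epi (π.f i) := by
  have : IsIso (((single C c i).obj X).homologyπ i) :=
    ((single C c i).obj X).isIso_homologyπ _ i rfl (by simp)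
  have : IsIso (((single C c i).obj X).iCycles i) :=
    ((single C c i).obj X).isIso_iCycles i _ rfl (by simp)
  have : Epi (cyclesMap π i ≫ ((single C c i).obj X).homologyπ i) := by
    rw [← homologyπ_naturality]
    infer_instance
  have : Epi (cyclesMap π i) := by
    simpa using this
  have : Epi (K.iCycles i ≫ π.f i) := by
    rw [← cyclesMap_i]
    infer_instance
  exact epi_of_epi (K.iCycles i) _

lemma exists_epi_Q_map_single_map_comp_eq_zero [HasDerivedCategory.{w} C] {X : C}
    {L : CochainComplex C ℤ} {n i : ℤ} (hn : n < i) [L.IsStrictlyLE n]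
    (α : Q.obj ((single C (.up ℤ) i).obj X) ⟶ Q.obj L) :
    ∃ (P : C) (p : P ⟶ X), Epi p ∧ Q.map ((single C (.up ℤ) i).map p) ≫ α = 0 := by
  have : CochainComplex.IsStrictlyLE ((single C (.up ℤ) i).obj X) i :=
    inferInstanceAs (((CochainComplex.singleFunctor C i).obj X).IsStrictlyLE i)
  -- Since `K` vanishes above degree `i`, its term `K.X i` maps to `K`; it also surjects onto `X`.
  obtain ⟨K, _, π, hπ, g, rfl⟩ := right_fac_of_isStrictlyLE α i
  rw [isIso_Q_map_iff_quasiIso] at hπ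
  have : Epi (π.f i) := epi_f_of_quasiIsoAt_single π
  let p : K.X i ⟶ X := π.f i ≫ (singleObjXSelf (.up ℤ) i X).hom
  let ι : (single C (.up ℤ) i).obj (K.X i) ⟶ K :=
    mkHomFromSingle (𝟙 _) fun j hj ↦
      (K.isZero_of_isStrictlyLE i j (by have : i + 1 = j := hj; lia)).eq_of_tgt _ _
  have hι : (single C (.up ℤ) i).map p = ι ≫ π := by
    apply from_single_hom_ext
    rw [single_map_f_self]
    simp [p, ι]
  have hg : ι ≫ g = 0 :=
    from_single_hom_ext ((L.isZero_of_isStrictlyLE n i hn).eq_of_tgt _ _)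
  refine ⟨K.X i, p, epi_comp _ _, ?_⟩
  rw [hι, Q.map_comp, Category.assoc, IsIso.hom_inv_id_assoc, ← Q.map_comp, hg, Q.map_zero]

variable [HasExt.{w} C]

lemma exists_epi_mk₀_comp_eq_zero {X Y : C} {n : ℕ} (e : Ext.{w} X Y (n + 1)) :
    ∃ (P : C) (p : P ⟶ X), Epi p ∧ (Ext.mk₀ p).comp e (zero_add _) = 0 := by
  let := HasDerivedCategory.standard C
  let shift := ((singleFunctors C).shiftIso (n + 1) (-(n + 1)) 0 (by lia)).hom.app Y
  obtain ⟨P, p, hp, h⟩ := exists_epi_Q_map_single_map_comp_eq_zero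
    (L := (CochainComplex.singleFunctor C (-(n + 1))).obj Y) (n := -(n + 1)) (i := 0) (by lia)
    (e.hom ≫ shift)
  refine ⟨P, p, hp, ?_⟩
  ext
  rw [← cancel_mono shift]
  simpa [ShiftedHom.mk₀_comp] using! h

lemma ext_induction {Y : C} {motive : ∀ ⦃X : C⦄ ⦃n : ℕ⦄, Ext.{w} X Y n → Prop}
    (mk₀ : ∀ ⦃X : C⦄ (f : X ⟶ Y), motive (Ext.mk₀ f))
    (extClass_comp : ∀ ⦃T : ShortComplex C⦄ (hT : T.ShortExact) ⦃n : ℕ⦄ (e : Ext.{w} T.X₁ Y n),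
      motive e → motive (hT.extClass.comp e (add_comm 1 n)))
    {X : C} {n : ℕ} (e : Ext.{w} X Y n) : motive e := by
  induction n generalizing X with
  | zero =>
    obtain ⟨f, rfl⟩ := (Ext.mk₀_bijective X Y).surjective e
    exact mk₀ f
  | succ n ih =>
    obtain ⟨P, p, _, hp⟩ := exists_epi_mk₀_comp_eq_zero e
    let T := ShortComplex.mk _ _ (kernel.condition p)
    have hT : T.ShortExact := { exact := ShortComplex.exact_kernel p }
    obtain ⟨e', rfl⟩ := Ext.contravariant_sequence_exact₃ hT Y e hp (add_comm 1 n)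
    exact extClass_comp hT e' (ih e')

end ExtInduction

section ExtFunctoriality

open Abelian

universe w w' w'' v v' v'' u₁ u₂ u₃

variable {C : Type u₁} [Category.{v} C] [Abelian C] [HasExt.{w} C]
  {D : Type u₂} [Category.{v'} D] [Abelian D] [HasExt.{w'} D]
  {B : Type u₃} [Category.{v''} B] [Abelian B] [HasExt.{w''} B]

/-- Dimension shifting along a short exact sequence whose middle term is projective. -/
noncomputable def extAddEquivOfProjective {T : ShortComplex C} (hT : T.ShortExact)
    [Projective T.X₂] (Y : C) (n : ℕ) :
    Ext.{w} T.X₁ Y (n + 1) ≃+ Ext.{w} T.X₃ Y (n + 2) :=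
  AddEquiv.ofBijective (hT.extClass.precomp Y (add_comm 1 (n + 1))) <| by
    have := Ext.subsingleton_of_projective.{w} T.X₂ Y n
    have := Ext.subsingleton_of_projective.{w} T.X₂ Y (n + 1)
    refine ⟨(injective_iff_map_eq_zero _).2 fun x hx ↦ ?_, fun y ↦
      Ext.contravariant_sequence_exact₃ hT Y y (Subsingleton.elim _ _) (add_comm 1 (n + 1))⟩
    obtain ⟨z, rfl⟩ := Ext.contravariant_sequence_exact₁ hT Y x (add_comm 1 (n + 1)) hx
    rw [Subsingleton.elim z 0, Ext.comp_zero]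

section

variable (F F' : C ⥤ D) [F.Additive] [PreservesFiniteLimits F] [PreservesFiniteColimits F]
  [F'.Additive] [PreservesFiniteLimits F'] [PreservesFiniteColimits F']
  (G : D ⥤ B) [G.Additive] [PreservesFiniteLimits G] [PreservesFiniteColimits G]

lemma mapExactFunctor_extClass_comp {T : ShortComplex C} (hT : T.ShortExact) {Y : C} {n m : ℕ}
    (e : Ext.{w} T.X₁ Y n) (h : 1 + n = m) :
    (hT.extClass.comp e h).mapExactFunctor F =
      (hT.map_of_exact F).extClass.comp (e.mapExactFunctor F : Ext.{w'} _ _ n) h :=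
  (Ext.mapExactFunctor_comp F _ _ h).trans
    (congrArg (Ext.comp · (e.mapExactFunctor F) h) (Ext.mapExactFunctor_extClass F hT))

lemma mapExactFunctor_id {X Y : C} {n : ℕ} (e : Ext.{w} X Y n) :
    e.mapExactFunctor (𝟭 C) = e := by
  induction e using ext_induction with
  | mk₀ f => exact Ext.mapExactFunctor_mk₀ ..
  | extClass_comp hT e ih =>
    exact (mapExactFunctor_extClass_comp ..).trans (congrArg (hT.extClass.comp · _) ih)

lemma mapExactFunctor_functor_comp
    [PreservesFiniteLimits (F ⋙ G)] [PreservesFiniteColimits (F ⋙ G)]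
    {X Y : C} {n : ℕ} (e : Ext.{w} X Y n) :
    (e.mapExactFunctor (F ⋙ G) : Ext.{w''} _ _ n) =
      (e.mapExactFunctor F : Ext.{w'} _ _ n).mapExactFunctor G := by
  induction e using ext_induction with
  | mk₀ f => simp only [Ext.mapExactFunctor_mk₀, Functor.comp_map]
  | @extClass_comp T hT n e ih =>
    rw [mapExactFunctor_extClass_comp (F ⋙ G), mapExactFunctor_extClass_comp F, ih]
    exact (mapExactFunctor_extClass_comp G (hT.map_of_exact F) _ _).symm

variable {F F'} in
lemma mapExactFunctor_naturality (τ : F ⟶ F') {X Y : C} {n : ℕ} (e : Ext.{w} X Y n) :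
    (Ext.mk₀ (τ.app X)).comp (e.mapExactFunctor F' : Ext.{w'} _ _ n) (zero_add n) =
      (e.mapExactFunctor F).comp (Ext.mk₀ (τ.app Y)) (add_zero n) := by
  induction e using ext_induction with
  | mk₀ f => simp only [Ext.mapExactFunctor_mk₀, Ext.mk₀_comp_mk₀, τ.naturality]
  | @extClass_comp T hT n e ih =>
    have hF := hT.map_of_exact F
    have hF' := hT.map_of_exact F'
    rw [mapExactFunctor_extClass_comp, mapExactFunctor_extClass_comp]
    calc
      _ = ((Ext.mk₀ (T.mapNatTrans τ).τ₃).comp hF'.extClass (zero_add 1)).comp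
          (e.mapExactFunctor F') _ := (Ext.comp_assoc _ _ _ (zero_add 1) _ (by lia)).symm
      _ = (hF.extClass.comp (Ext.mk₀ (T.mapNatTrans τ).τ₁) (add_zero 1)).comp
          (e.mapExactFunctor F') _ :=
        congrArg (Ext.comp · (e.mapExactFunctor F') _) (hF.extClass_naturality hF' _).symm
      _ = hF.extClass.comp ((Ext.mk₀ (τ.app T.X₁)).comp (e.mapExactFunctor F') (zero_add n)) _ :=
        Ext.comp_assoc _ _ _ (add_zero 1) (zero_add n) (by lia)
      _ = hF.extClass.comp ((e.mapExactFunctor F).comp (Ext.mk₀ (τ.app Y)) (add_zero n)) _ :=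
        congrArg (hF.extClass.comp · _) ih
      _ = _ := (Ext.comp_assoc _ _ _ _ (add_zero n) (by lia)).symm

end

variable {F : C ⥤ D} {G : D ⥤ C} [F.Additive] [PreservesFiniteLimits F]
  [PreservesFiniteColimits F] [G.Additive] [PreservesFiniteLimits G] [PreservesFiniteColimits G]
  (adj : G ⊣ F)

lemma unit_comp_mapExactFunctor {X Y : D} {n : ℕ} (e : Ext.{w'} X Y n) :
    (Ext.mk₀ (adj.unit.app X)).comp
        ((e.mapExactFunctor G : Ext.{w} _ _ n).mapExactFunctor F) (zero_add n) =
      e.comp (Ext.mk₀ (adj.unit.app Y)) (add_zero n) := by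
  have := comp_preservesFiniteLimits G F
  have := comp_preservesFiniteColimits G F
  have h := mapExactFunctor_naturality adj.unit e
  rwa [mapExactFunctor_functor_comp, mapExactFunctor_id] at h

lemma mapExactFunctor_comp_counit {X Y : C} {n : ℕ} (e : Ext.{w} X Y n) :
    ((e.mapExactFunctor F : Ext.{w'} _ _ n).mapExactFunctor G).comp
        (Ext.mk₀ (adj.counit.app Y)) (add_zero n) =
      (Ext.mk₀ (adj.counit.app X)).comp e (zero_add n) := by
  have := comp_preservesFiniteLimits F G
  have := comp_preservesFiniteColimits F G
  have h := mapExactFunctor_naturality adj.counit e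
  rw [mapExactFunctor_functor_comp, mapExactFunctor_id] at h
  exact h.symm

/-- The isomorphism between `Ext` groups induced by an adjunction `G ⊣ F` of exact functors. -/
noncomputable def extAddEquivOfAdjunction (X : D) (Y : C) (n : ℕ) :
    Ext.{w} (G.obj X) Y n ≃+ Ext.{w'} X (F.obj Y) n where
  toFun e := (Ext.mk₀ (adj.unit.app X)).comp (e.mapExactFunctor F) (zero_add n)
  invFun e := (e.mapExactFunctor G).comp (Ext.mk₀ (adj.counit.app Y)) (add_zero n)
  left_inv e := by
    dsimp only
    rw [Ext.mapExactFunctor_comp, Ext.mapExactFunctor_mk₀, Ext.comp_assoc_of_third_deg_zero,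
      mapExactFunctor_comp_counit, Ext.mk₀_comp_mk₀_assoc, adj.left_triangle_components,
      Ext.mk₀_id_comp]
  right_inv e := by
    dsimp only
    rw [Ext.mapExactFunctor_comp, Ext.mapExactFunctor_mk₀, ← Ext.comp_assoc_of_third_deg_zero,
      unit_comp_mapExactFunctor, Ext.comp_assoc_of_third_deg_zero, Ext.mk₀_comp_mk₀,
      adj.right_triangle_components, Ext.comp_mk₀_id]
  map_add' e e' := by simp

end ExtFunctoriality

section Comma

open scoped ZeroObject

universe w w' v v' u₁ u₂

section

variable {C : Type u₁} [Category.{v} C] {D : Type u₂} [Category.{v'} D] (K : C ⥤ D)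

/-- The functor `N ↦ (N, K N, 𝟙)`. -/
def commaDiag : C ⥤ Comma K (𝟭 D) where
  obj N := { left := N, right := K.obj N, hom := 𝟙 _ }
  map f := { left := f, right := K.map f }

/-- `N ↦ (N, K N, 𝟙)` is left adjoint to `(N, M, f) ↦ N`. -/
def commaDiagAdjunction : commaDiag K ⊣ Comma.fst K (𝟭 D) :=
  Adjunction.mkOfHomEquiv
    { homEquiv _ L :=
        { toFun f := f.left
          invFun g := { left := g, right := K.map g ≫ L.hom, w := (Category.id_comp _).symm }
          left_inv f := Comma.hom_ext _ _ rfl (f.w.trans (Category.id_comp f.right))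
          right_inv _ := rfl }
      homEquiv_naturality_left_symm _ _ := Comma.hom_ext _ _ rfl (K.map_comp_assoc _ _ _)
      homEquiv_naturality_right _ _ := rfl }

instance : (Comma.fst K (𝟭 D)).IsRightAdjoint := (commaDiagAdjunction K).isRightAdjoint

variable [HasZeroMorphisms C] [HasZeroObject C] [HasZeroMorphisms D] [K.PreservesZeroMorphisms]

/-- The functor `M ↦ (0, M, 0)`. -/
noncomputable def commaOfRight : D ⥤ Comma K (𝟭 D) where
  obj M := { left := 0, right := M, hom := 0 }
  map f := { left := 0, right := f }

variable {K} in
lemma commaOfRight_hom_ext {M : D} {L : Comma K (𝟭 D)} {f g : (commaOfRight K).obj M ⟶ L}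
    (h : f.right = g.right) : f = g :=
  Comma.hom_ext _ _ ((isZero_zero C).eq_of_src _ _) h

/-- `M ↦ (0, M, 0)` is left adjoint to `(N, M, f) ↦ M`. -/
noncomputable def commaOfRightAdjunction : commaOfRight K ⊣ Comma.snd K (𝟭 D) :=
  Adjunction.mkOfHomEquiv
    { homEquiv _ _ :=
        { toFun f := f.right
          invFun g :=
            { left := 0
              right := g
              w := (K.map_isZero (isZero_zero C)).eq_of_src _ _ }
          left_inv _ := commaOfRight_hom_ext rfl
          right_inv _ := rfl }
      homEquiv_naturality_left_symm _ _ := commaOfRight_hom_ext rfl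
      homEquiv_naturality_right _ _ := rfl }

instance : (Comma.snd K (𝟭 D)).IsRightAdjoint := (commaOfRightAdjunction K).isRightAdjoint

instance : (commaOfRight K).IsLeftAdjoint := (commaOfRightAdjunction K).isLeftAdjoint

end

variable {C : Type u₁} [Category.{v} C] [Abelian C] {D : Type u₂} [Category.{v'} D] [Abelian D]
  (K : C ⥤ D) [PreservesFiniteColimits K]

instance : PreservesFiniteColimits (Comma.fst K (𝟭 D)) where
  preservesFiniteColimits _ := inferInstance

instance : PreservesFiniteColimits (Comma.snd K (𝟭 D)) where
  preservesFiniteColimits _ := inferInstance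

variable [Abelian (Comma K (𝟭 D))]

instance : (Comma.fst K (𝟭 D)).Additive := Functor.additive_of_preserves_binary_products _

instance : (Comma.snd K (𝟭 D)).Additive := Functor.additive_of_preserves_binary_products _

instance : (commaOfRight K).Additive := (commaOfRightAdjunction K).left_adjoint_additive

variable {K}

lemma comma_exact {T : ShortComplex (Comma K (𝟭 D))}
    (h₁ : (T.map (Comma.fst K (𝟭 D))).Exact) (h₂ : (T.map (Comma.snd K (𝟭 D))).Exact) :
    T.Exact := by
  rw [ShortComplex.exact_iff_isZero_homology] at h₁ h₂ ⊢
  have h₁' := h₁.of_iso (T.mapHomologyIso (Comma.fst K (𝟭 D))).symm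
  have h₂' := h₂.of_iso (T.mapHomologyIso (Comma.snd K (𝟭 D))).symm
  exact (IsZero.iff_id_eq_zero _).2
    (Comma.hom_ext _ _ (h₁'.eq_of_src _ _) (h₂'.eq_of_src _ _))

lemma comma_shortExact {T : ShortComplex (Comma K (𝟭 D))}
    (h₁ : (T.map (Comma.fst K (𝟭 D))).ShortExact) (h₂ : (T.map (Comma.snd K (𝟭 D))).ShortExact) :
    T.ShortExact where
  exact := comma_exact h₁.exact h₂.exact
  mono_f := ⟨fun _ _ h ↦ Comma.hom_ext _ _
    (h₁.mono_f.right_cancellation _ _ (congrArg CommaMorphism.left h))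
    (h₂.mono_f.right_cancellation _ _ (congrArg CommaMorphism.right h))⟩
  epi_g := ⟨fun _ _ h ↦ Comma.hom_ext _ _
    (h₁.epi_g.left_cancellation _ _ (congrArg CommaMorphism.left h))
    (h₂.epi_g.left_cancellation _ _ (congrArg CommaMorphism.right h))⟩

lemma commaOfRight_map_shortExact {T : ShortComplex D} (hT : T.ShortExact) :
    (T.map (commaOfRight K)).ShortExact :=
  comma_shortExact (ShortComplex.Splitting.ofIsZeroOfIsIso _ (isZero_zero C)
    ((isZero_zero C).isIso (isZero_zero C) _)).shortExact hT

instance : PreservesFiniteLimits (commaOfRight K) := by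
  have h := (commaOfRight K).exact_tfae.out 0 3
  exact (h.1 fun _ ↦ commaOfRight_map_shortExact).1

/-- The short complex `(0, K N, 0) ⟶ (N, K N, 𝟙) ⟶ (N, 0, 0)`, where `E = (N, 0, 0)`. -/
noncomputable def commaResolution (E : Comma K (𝟭 D)) (hE : IsZero E.right) :
    ShortComplex (Comma K (𝟭 D)) where
  X₁ := (commaOfRight K).obj (K.obj E.left)
  X₂ := (commaDiag K).obj E.left
  X₃ := E
  f := (commaOfRightAdjunction K).counit.app ((commaDiag K).obj E.left)
  g := (commaDiagAdjunction K).counit.app E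
  zero := commaOfRight_hom_ext (hE.eq_of_tgt _ _)

lemma commaResolution_shortExact (E : Comma K (𝟭 D)) (hE : IsZero E.right) :
    (commaResolution E hE).ShortExact :=
  comma_shortExact
    (ShortComplex.Splitting.ofIsZeroOfIsIso _ (isZero_zero C) (.id _)).shortExact
    (ShortComplex.Splitting.ofIsIsoOfIsZero _ (.id _) hE).shortExact

instance (E : Comma K (𝟭 D)) (hE : IsZero E.right) [Projective E.left] :
    Projective (commaResolution E hE).X₂ :=
  (commaDiagAdjunction K).map_projective _ ‹_›

theorem ext_from_E_higher_general [HasExt.{w} (Comma K (𝟭 D))] [HasExt.{w'} D]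
    (E L : Comma K (𝟭 D)) [Projective E.left] (hE : IsZero E.right) {i : ℕ} (hi : 2 ≤ i) :
    Nonempty (Abelian.Ext.{w} E L i ≃+ Abelian.Ext.{w'} (K.obj E.left) L.right (i - 1)) := by
  obtain ⟨n, rfl⟩ := Nat.exists_eq_add_of_le' hi
  have shift := extAddEquivOfProjective (commaResolution_shortExact E hE) L n
  have adj := extAddEquivOfAdjunction (commaOfRightAdjunction K) (K.obj E.left) L (n + 1)
  exact ⟨shift.symm.trans adj⟩

end Comma

/-- For `L = (N, M, f)` in `A` and `E = (S, 0, 0)`, one has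
`Ext^i_A(E, L) ≅ Ext^{i-1}_R(S, M)` for all `i ≥ 2`, where `S` is viewed as a left
`R`-module via the ring homomorphism `φ : R → S`. -/
theorem ext_from_E_higher [Abelian (TripleCat φ)] [CategoryTheory.HasExt.{u} (TripleCat φ)]
    [CategoryTheory.HasExt.{u} (ModuleCat.{u} R)] (L : TripleCat φ) :
    ∀ i : ℕ, 2 ≤ i →
      Nonempty (CategoryTheory.Abelian.Ext (Eobj φ) L i ≃+
        CategoryTheory.Abelian.Ext
          ((ModuleCat.restrictScalars φ).obj (ModuleCat.of S S)) L.right (i - 1)) := by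
  intro i hi
  have : Projective (Eobj φ).left := inferInstanceAs (Projective (ModuleCat.of S S))
  have hE : IsZero (Eobj φ).right := ModuleCat.isZero_of_subsingleton (ModuleCat.of R PUnit)
  exact ext_from_E_higher_general (Eobj φ) L hE hi
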